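/- The following statements are equivalent for an integral domain R: (1) R is a generalized Krull domain, i.e., there is a set 𝒫 of height-one prime ideals of R such that R_P is a valuation domain for each P ∈ 𝒫, R = ⋂_{P∈𝒫} R_P inside the quotient field, and every nonzero element of R lies in only finitely many members of 𝒫; (2) R is a t-potent essential domain of t-dimension one; (3) R is a t-potent Prüfer v-multiplication domain of t-dimension one; (4) R is a completely integrally closed t-super potent domain; (5) R is a t-super potent domain of t-dimension one. -/

import Mathlib

open FractionalIdeal

/-- The fractional ideals of `R` inside its field of fractions. -/
abbrev FracId (R : Type*) [CommRing R] : Type _ :=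
  FractionalIdeal (nonZeroDivisors R) (FractionRing R)

/-- A star operation on an integral domain `R`: a map on nonzero fractional ideals satisfying
`(cA)⋆ = c·A⋆`, `R⋆ = R`, `A ⊆ A⋆`, monotonicity, and idempotence.  (The value on the zero
ideal is irrelevant.) -/
structure StarOp (R : Type*) [CommRing R] [IsDomain R] where
  star : FracId R → FracId R
  star_smul : ∀ c : FractionRing R, c ≠ 0 → ∀ I : FracId R, I ≠ 0 →
    star (spanSingleton (nonZeroDivisors R) c * I) = spanSingleton (nonZeroDivisors R) c * star I
  star_one : star 1 = 1
  le_star : ∀ I : FracId R, I ≠ 0 → I ≤ star I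
  star_mono : ∀ I J : FracId R, I ≠ 0 → J ≠ 0 → I ≤ J → star I ≤ star J
  star_idem : ∀ I : FracId R, I ≠ 0 → star (star I) = star I

namespace StarOp

variable {R : Type*} [CommRing R] [IsDomain R]

/-- A star operation has finite type if `A⋆` is the union of `J⋆` over the nonzero finitely
generated (fractional) subideals `J` of `A`. -/
def FiniteType (s : StarOp R) : Prop :=
  ∀ I : FracId R, I ≠ 0 → ∀ x : FractionRing R, (x ∈ s.star I ↔
    ∃ J : FracId R, J ≠ 0 ∧ (J : Submodule R (FractionRing R)).FG ∧ J ≤ I ∧ x ∈ s.star J)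

/-- `⋆₁ ≤ ⋆₂` : `I^⋆₁ ⊆ I^⋆₂` for every nonzero fractional ideal `I`. -/
def le (s₁ s₂ : StarOp R) : Prop := ∀ I : FracId R, I ≠ 0 → s₁.star I ≤ s₂.star I

/-- A (nonzero integral) `⋆`-ideal: an ideal with `I⋆ = I`. -/
def IsStarIdeal (s : StarOp R) (I : Ideal R) : Prop :=
  I ≠ ⊥ ∧ s.star (I : FracId R) = (I : FracId R)

/-- A maximal `⋆`-ideal: maximal among proper integral `⋆`-ideals. -/
def IsMaxStarIdeal (s : StarOp R) (M : Ideal R) : Prop :=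
  M ≠ ⊤ ∧ s.IsStarIdeal M ∧ ∀ J : Ideal R, J ≠ ⊤ → s.IsStarIdeal J → M ≤ J → J = M

/-- A nonzero ideal `I` is `⋆`-invertible if `(I·I⁻¹)⋆ = R`. -/
def IsStarInvertible (s : StarOp R) (I : Ideal R) : Prop :=
  I ≠ ⊥ ∧ s.star ((I : FracId R) * ((1 : FracId R) / (I : FracId R))) = 1

/-- A nonzero finitely generated ideal is `⋆`-rigid if it is contained in exactly one maximal
`⋆`-ideal. -/
def IsRigid (s : StarOp R) (I : Ideal R) : Prop :=
  I ≠ ⊥ ∧ I.FG ∧ ∃! M : Ideal R, s.IsMaxStarIdeal M ∧ I ≤ M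

/-- A `⋆`-rigid ideal is `⋆`-super rigid if every finitely generated ideal containing it is
`⋆`-invertible. -/
def IsSuperRigid (s : StarOp R) (I : Ideal R) : Prop :=
  s.IsRigid I ∧ ∀ J : Ideal R, J.FG → I ≤ J → s.IsStarInvertible J

/-- A maximal `⋆`-ideal is `⋆`-potent if it contains a `⋆`-rigid ideal. -/
def IsPotent (s : StarOp R) (M : Ideal R) : Prop :=
  s.IsMaxStarIdeal M ∧ ∃ I : Ideal R, s.IsRigid I ∧ I ≤ M

/-- A maximal `⋆`-ideal is `⋆`-super potent if it contains a `⋆`-super rigid ideal. -/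
def IsSuperPotent (s : StarOp R) (M : Ideal R) : Prop :=
  s.IsMaxStarIdeal M ∧ ∃ I : Ideal R, s.IsSuperRigid I ∧ I ≤ M

/-- `R` is `⋆`-potent if every maximal `⋆`-ideal is `⋆`-potent. -/
def PotentDomain (s : StarOp R) : Prop :=
  ∀ M : Ideal R, s.IsMaxStarIdeal M → s.IsPotent M

/-- `R` is `⋆`-super potent if every maximal `⋆`-ideal is `⋆`-super potent. -/
def SuperPotentDomain (s : StarOp R) : Prop :=
  ∀ M : Ideal R, s.IsMaxStarIdeal M → s.IsSuperPotent M

end StarOp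

section TOperation

variable {R : Type*} [CommRing R] [IsDomain R]

/-- The `v`-operation `J ↦ (J⁻¹)⁻¹` on fractional ideals. -/
noncomputable def vOp (J : FracId R) : FracId R :=
  (1 : FracId R) / ((1 : FracId R) / J)

/-- The `t`-closure of a fractional ideal: the union of `J^v` over all nonzero finitely
generated subideals `J` (realized as a submodule of the fraction field). -/
noncomputable def tOp (I : FracId R) : Submodule R (FractionRing R) :=
  ⨆ J ∈ {J : FracId R | J ≠ 0 ∧ (J : Submodule R (FractionRing R)).FG ∧ J ≤ I},
    ((vOp J : FracId R) : Submodule R (FractionRing R))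

/-- A (nonzero integral) `t`-ideal. -/
def IsTIdeal (I : Ideal R) : Prop :=
  I ≠ ⊥ ∧ tOp (I : FracId R) = ((I : FracId R) : Submodule R (FractionRing R))

/-- A maximal `t`-ideal: maximal among proper integral `t`-ideals. -/
def IsMaxTIdeal (M : Ideal R) : Prop :=
  M ≠ ⊤ ∧ IsTIdeal M ∧ ∀ J : Ideal R, J ≠ ⊤ → IsTIdeal J → M ≤ J → J = M

/-- A nonzero ideal `I` is `t`-invertible if `(I·I⁻¹)^t = R`. -/
def IsTInvertible (I : Ideal R) : Prop :=
  I ≠ ⊥ ∧ tOp ((I : FracId R) * ((1 : FracId R) / (I : FracId R))) =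
    ((1 : FracId R) : Submodule R (FractionRing R))

/-- A nonzero finitely generated ideal is `t`-rigid if it is contained in exactly one maximal
`t`-ideal. -/
def IsTRigid (I : Ideal R) : Prop :=
  I ≠ ⊥ ∧ I.FG ∧ ∃! M : Ideal R, IsMaxTIdeal M ∧ I ≤ M

/-- A `t`-rigid ideal is `t`-super rigid if every finitely generated ideal containing it is
`t`-invertible. -/
def IsTSuperRigid (I : Ideal R) : Prop :=
  IsTRigid I ∧ ∀ J : Ideal R, J.FG → I ≤ J → IsTInvertible J

/-- A maximal `t`-ideal is `t`-potent if it contains a `t`-rigid ideal. -/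
def IsTPotent (M : Ideal R) : Prop :=
  IsMaxTIdeal M ∧ ∃ I : Ideal R, IsTRigid I ∧ I ≤ M

/-- A maximal `t`-ideal is `t`-super potent if it contains a `t`-super rigid ideal. -/
def IsTSuperPotent (M : Ideal R) : Prop :=
  IsMaxTIdeal M ∧ ∃ I : Ideal R, IsTSuperRigid I ∧ I ≤ M

end TOperation

/-- `R` is `t`-potent if every maximal `t`-ideal is `t`-potent. -/
def TPotentDomain (R : Type*) [CommRing R] [IsDomain R] : Prop :=
  ∀ M : Ideal R, IsMaxTIdeal M → IsTPotent M

/-- `R` is `t`-super potent if every maximal `t`-ideal is `t`-super potent. -/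
def TSuperPotentDomain (R : Type*) [CommRing R] [IsDomain R] : Prop :=
  ∀ M : Ideal R, IsMaxTIdeal M → IsTSuperPotent M

/-- An ideal is invertible if `I·I⁻¹ = R` (as fractional ideals). -/
def IsInvertibleIdeal {R : Type*} [CommRing R] [IsDomain R] (I : Ideal R) : Prop :=
  I ≠ ⊥ ∧ (I : FracId R) * ((1 : FracId R) / (I : FracId R)) = 1

/-- An ideal `M` is `d`-super potent if it contains a nonzero finitely generated ideal `I`
such that every finitely generated ideal containing `I` is invertible. -/
def IsDSuperPotent {R : Type*} [CommRing R] [IsDomain R] (M : Ideal R) : Prop :=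
  ∃ I : Ideal R, I ≠ ⊥ ∧ I.FG ∧ I ≤ M ∧ ∀ J : Ideal R, J.FG → I ≤ J → IsInvertibleIdeal J

/-- An ideal `P` is divided (`P = P R_P`): every `x ∈ P` is divisible, within `P`, by every
`s ∉ P`. -/
def IsDividedIdeal {R : Type*} [CommRing R] (P : Ideal R) : Prop :=
  ∀ x ∈ P, ∀ s ∉ P, ∃ y ∈ P, x = s * y

/-- A divided prime ideal. -/
def IsDividedPrime {R : Type*} [CommRing R] (P : Ideal R) : Prop :=
  P.IsPrime ∧ IsDividedIdeal P

/-- A valuation domain: an integral domain in which, for any two elements, one divides the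
other (equivalently, the ideals are totally ordered by inclusion). -/
def IsValuationDomain (A : Type*) [CommRing A] : Prop :=
  IsDomain A ∧ ∀ a b : A, a ∣ b ∨ b ∣ a

/-- A height-one prime: a nonzero prime ideal such that the only prime strictly below it
is `(0)`. -/
def HeightOnePrime {R : Type*} [CommRing R] (P : Ideal R) : Prop :=
  P.IsPrime ∧ P ≠ ⊥ ∧ ∀ Q : Ideal R, Q.IsPrime → Q < P → Q = ⊥

/-- `R` has `t`-dimension one: every maximal `t`-ideal has height one. -/
def TDimensionOne (R : Type*) [CommRing R] [IsDomain R] : Prop :=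
  ∀ M : Ideal R, IsMaxTIdeal M → HeightOnePrime M

/-- `R` is completely integrally closed: if `a ∈ R` is nonzero, `u` is in the fraction field,
and `a·uⁿ ∈ R` for all `n ≥ 1`, then `u ∈ R`. -/
def CompletelyIntegrallyClosed (R : Type*) [CommRing R] [IsDomain R] : Prop :=
  ∀ (a : R) (u : FractionRing R), a ≠ 0 →
    (∀ n : ℕ, 0 < n → ∃ r : R, algebraMap R (FractionRing R) a * u ^ n =
      algebraMap R (FractionRing R) r) →
    ∃ r : R, algebraMap R (FractionRing R) r = u

/-- A Prüfer `v`-multiplication domain: every nonzero finitely generated ideal is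
`t`-invertible. -/
def IsPvMD (R : Type*) [CommRing R] [IsDomain R] : Prop :=
  ∀ I : Ideal R, I ≠ ⊥ → I.FG → IsTInvertible I

/-- `x` (in the fraction field) belongs to the localization `R_P`, i.e. `x = r/s` with
`s ∉ P`. -/
def MemLocalizationAt {R : Type*} [CommRing R] [IsDomain R] (P : Ideal R)
    (x : FractionRing R) : Prop :=
  ∃ r s : R, s ∉ P ∧ algebraMap R (FractionRing R) s * x = algebraMap R (FractionRing R) r

/-- An essential domain: `R` is an intersection (inside its fraction field) of localizations
at primes which are valuation domains. -/
def EssentialDomain (R : Type*) [CommRing R] [IsDomain R] : Prop :=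
  ∃ 𝓟 : Set (Ideal R),
    (∀ P ∈ 𝓟, ∃ hP : P.IsPrime,
      IsValuationDomain (Localization (@Ideal.primeCompl R _ P hP))) ∧
    (∀ x : FractionRing R, (∀ P ∈ 𝓟, MemLocalizationAt P x) ↔
      ∃ r : R, algebraMap R (FractionRing R) r = x)

/-- A generalized Krull domain: `R` is a locally finite intersection of essential rank-one
(height-one) valuation localizations. -/
def GeneralizedKrullDomain (R : Type*) [CommRing R] [IsDomain R] : Prop :=
  ∃ 𝓟 : Set (Ideal R),
    (∀ P ∈ 𝓟, ∃ hP : P.IsPrime, HeightOnePrime P ∧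
      IsValuationDomain (Localization (@Ideal.primeCompl R _ P hP))) ∧
    (∀ x : FractionRing R, (∀ P ∈ 𝓟, MemLocalizationAt P x) ↔
      ∃ r : R, algebraMap R (FractionRing R) r = x) ∧
    (∀ a : R, a ≠ 0 → {P : Ideal R | P ∈ 𝓟 ∧ a ∈ P}.Finite)

/-!
A nonzero ideal has proper `t`-closure exactly when it contains no finitely generated `J` with
`J⁻¹ = R` (a Glaz–Vasconcelos ideal), so membership in `R` and `t`-invertibility can be tested at
the maximal `t`-ideals `M`: a finitely generated ideal is `t`-invertible iff it becomes principal in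
every `R_M`, and `R` is a PvMD iff every `R_M` is a valuation domain.

If the maximal `t`-ideals have height one, a `t`-rigid ideal `I ≤ M` has a power which is divisible
in `R_M` by a given `a ≠ 0`. So there is `s ∉ M` which lies in every other maximal `t`-ideal
containing `a`, and the ideal of elements lying in almost all of these contains a Glaz–Vasconcelos
ideal: there are only finitely many of them. Conversely, prime avoidance turns finite `t`-character
into `t`-potency.

A `t`-super rigid ideal `I ≤ M` becomes `(g)` in `R_M`, where every divisor of `g`, and hence every
divisor of a power of `g`, is comparable with all elements under divisibility. In height one every
nonzero element divides a power of `g`, so `R_M` is a valuation domain. In general, if a prime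
`P ≤ M` does not contain `I` and `a ∈ P`, then `a` is divisible by all `gⁿ` in `R_M`, hence
`a * yⁿ ∈ R` for every `y ∈ I⁻¹`. Complete integral closure and `I⁻¹ ≠ R` then force `a = 0`.
Enlarging `I` by an element of `M` outside `P` applies this to every prime strictly below `M`.
-/

section DenominatorIdeal

variable {R A : Type*} [CommRing R] [CommRing A] [Algebra R A]

/-- The ideal `(R :_R y)` of denominators of `y`. For `y` in the fraction field of a domain `R`,
the colon ideals of `v`-theory become comparisons with denominator ideals: `y ∈ J⁻¹` means
`J ≤ denominatorIdeal y`, and `y ∈ R_P` means `¬ denominatorIdeal y ≤ P`. -/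
def denominatorIdeal (R : Type*) {A : Type*} [CommRing R] [CommRing A] [Algebra R A] (y : A) :
    Ideal R :=
  (1 : Submodule R A).colon {y}

theorem mem_denominatorIdeal {y : A} {r : R} :
    r ∈ denominatorIdeal R y ↔ ∃ c, algebraMap R A c = algebraMap R A r * y := by
  rw [denominatorIdeal, Submodule.mem_colon_singleton, Submodule.mem_one, Algebra.smul_def]

theorem denominatorIdeal_eq_top_iff {y : A} :
    denominatorIdeal R y = ⊤ ↔ ∃ c, algebraMap R A c = y := by
  rw [Ideal.eq_top_iff_one, mem_denominatorIdeal, map_one, one_mul]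

theorem mem_denominatorIdeal_algebraMap_mul {y : A} {r s : R} :
    r ∈ denominatorIdeal R (algebraMap R A s * y) ↔ r * s ∈ denominatorIdeal R y := by
  simp only [mem_denominatorIdeal, map_mul, mul_assoc]

theorem denominatorIdeal_mul_le (y z : A) :
    denominatorIdeal R y * denominatorIdeal R z ≤ denominatorIdeal R (y * z) := by
  refine Ideal.mul_le.2 fun r hr s hs => ?_
  obtain ⟨c, hc⟩ := mem_denominatorIdeal.1 hr
  obtain ⟨d, hd⟩ := mem_denominatorIdeal.1 hs
  exact mem_denominatorIdeal.2 ⟨c * d, by rw [map_mul, map_mul, hc, hd, mul_mul_mul_comm]⟩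

theorem denominatorIdeal_pow_le (y : A) (n : ℕ) :
    denominatorIdeal R y ^ n ≤ denominatorIdeal R (y ^ n) := by
  induction n with
  | zero =>
    rw [pow_zero, pow_zero, denominatorIdeal_eq_top_iff.2 ⟨1, map_one _⟩]
    exact le_top
  | succ n ih =>
    rw [pow_succ, pow_succ]
    exact (Ideal.mul_mono_left ih).trans (denominatorIdeal_mul_le _ _)

theorem denominatorIdeal_ne_bot [Nontrivial R] (y : FractionRing R) : denominatorIdeal R y ≠ ⊥ := by
  obtain ⟨⟨a, s⟩, h⟩ := IsLocalization.surj (nonZeroDivisors R) y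
  refine (Submodule.ne_bot_iff _).2
    ⟨s, mem_denominatorIdeal.2 ⟨a, ?_⟩, nonZeroDivisors.coe_ne_zero s⟩
  rw [← h, mul_comm]

variable [IsDomain R]

theorem memLocalizationAt_iff {P : Ideal R} {y : FractionRing R} :
    MemLocalizationAt P y ↔ ¬ denominatorIdeal R y ≤ P := by
  simp only [MemLocalizationAt, SetLike.not_le_iff_exists, mem_denominatorIdeal]
  grind

theorem mem_inv_coeIdeal_iff {J : Ideal R} (hJ : J ≠ ⊥) {y : FractionRing R} :
    y ∈ (J : FracId R)⁻¹ ↔ J ≤ denominatorIdeal R y := by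
  simp only [FractionalIdeal.inv_eq, mem_div_iff_of_ne_zero (coeIdeal_ne_zero.2 hJ), mem_coeIdeal,
    mem_one_iff, SetLike.le_def, mem_denominatorIdeal, forall_exists_index, and_imp,
    forall_apply_eq_imp_iff₂, mul_comm y]

end DenominatorIdeal

section TIdeals

theorem spanSingleton_fg {R K : Type*} [CommRing R] [CommRing K] [Algebra R K] (S : Submonoid R)
    [IsLocalization S K] (x : K) : (spanSingleton S x : Submodule R K).FG := by
  rw [coe_spanSingleton]
  exact Submodule.fg_span_singleton x

theorem exists_fg_le_sup_of_le_sup {R M : Type*} [Semiring R] [AddCommMonoid M] [Module R M]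
    {L N P : Submodule R M} (hL : L.FG) (h : L ≤ N ⊔ P) : ∃ J ≤ N, J.FG ∧ L ≤ J ⊔ P := by
  induction L, hL using Submodule.fg_induction with
  | singleton x =>
    obtain ⟨n, hn, p, hp, hx⟩ := Submodule.mem_sup.1 (h (Submodule.mem_span_singleton_self x))
    refine ⟨R ∙ n, (Submodule.span_singleton_le_iff_mem _ _).2 hn,
      Submodule.fg_span_singleton n, ?_⟩
    rw [Submodule.span_singleton_le_iff_mem, ← hx]
    exact Submodule.add_mem_sup (Submodule.mem_span_singleton_self n) hp
  | sup L₁ L₂ _ _ h₁ h₂ =>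
    obtain ⟨J₁, hJ₁, hfg₁, hle₁⟩ := h₁ (le_sup_left.trans h)
    obtain ⟨J₂, hJ₂, hfg₂, hle₂⟩ := h₂ (le_sup_right.trans h)
    exact ⟨J₁ ⊔ J₂, sup_le hJ₁ hJ₂, hfg₁.sup hfg₂,
      sup_le (hle₁.trans (sup_le_sup_right le_sup_left _))
        (hle₂.trans (sup_le_sup_right le_sup_right _))⟩

variable {R : Type*} [CommRing R] [IsDomain R]

theorem inv_fractionalIdeal_ne_zero {I : FracId R} (hI : I ≠ 0) : I⁻¹ ≠ 0 :=
  right_ne_zero_of_mul (bot_lt_mul_inv hI).ne'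

theorem le_vOp {I : FracId R} (hI : I ≠ 0) : I ≤ vOp I :=
  (le_div_iff_mul_le (inv_fractionalIdeal_ne_zero hI)).2 mul_one_div_le_one

theorem vOp_mono {I J : FracId R} (hI : I ≠ 0) (hIJ : I ≤ J) : vOp I ≤ vOp J := by
  have hJ : J ≠ 0 := ne_bot_of_le_ne_bot hI hIJ
  exact inv_anti_mono (inv_fractionalIdeal_ne_zero hJ) (inv_fractionalIdeal_ne_zero hI)
    (inv_anti_mono hI hJ hIJ)

theorem vOp_one : vOp (1 : FracId R) = 1 := by
  rw [vOp, FractionalIdeal.div_one, FractionalIdeal.div_one]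

theorem algebraMap_mem_vOp_coeIdeal_iff {J : Ideal R} (hJ : J ≠ ⊥) {r : R} :
    algebraMap R (FractionRing R) r ∈ vOp (J : FracId R) ↔
      ∀ y : FractionRing R, J ≤ denominatorIdeal R y → r ∈ denominatorIdeal R y := by
  have hJ' : (J : FracId R)⁻¹ ≠ 0 := inv_fractionalIdeal_ne_zero (coeIdeal_ne_zero.2 hJ)
  rw [vOp, ← FractionalIdeal.inv_eq, ← FractionalIdeal.inv_eq, mem_inv_iff hJ']
  simp only [mem_inv_coeIdeal_iff hJ, mem_denominatorIdeal, FractionalIdeal.mem_one_iff]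

theorem vOp_le_tOp {I J : FracId R} (hJ : J ≠ 0)
    (hfg : (J : Submodule R (FractionRing R)).FG) (hJI : J ≤ I) :
    (vOp J : Submodule R (FractionRing R)) ≤ tOp I :=
  le_iSup₂_of_le J ⟨hJ, hfg, hJI⟩ le_rfl

theorem le_tOp (I : FracId R) : (I : Submodule R (FractionRing R)) ≤ tOp I := by
  intro x hx
  obtain rfl | hx0 := eq_or_ne x 0
  · exact zero_mem _
  have hspan : spanSingleton (nonZeroDivisors R) x ≠ 0 := spanSingleton_ne_zero_iff.2 hx0
  exact vOp_le_tOp hspan (spanSingleton_fg _ x) (spanSingleton_le_iff_mem.2 hx)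
    (le_vOp hspan (mem_spanSingleton_self _ x))

theorem mem_tOp_iff {I : FracId R} (hI : I ≠ 0) {x : FractionRing R} :
    x ∈ tOp I ↔
      ∃ J : FracId R, J ≠ 0 ∧ (J : Submodule R (FractionRing R)).FG ∧ J ≤ I ∧ x ∈ vOp J := by
  have hne : {J : FracId R | J ≠ 0 ∧ (J : Submodule R (FractionRing R)).FG ∧ J ≤ I}.Nonempty := by
    obtain ⟨x, hx, hx0⟩ := SetLike.exists_of_lt (bot_lt_iff_ne_bot.2 hI)
    exact ⟨spanSingleton _ x, spanSingleton_ne_zero_iff.2 fun h => hx0 (h ▸ zero_mem _),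
      spanSingleton_fg _ x, spanSingleton_le_iff_mem.2 hx⟩
  have hdir : DirectedOn (fun J L : FracId R =>
      (vOp J : Submodule R (FractionRing R)) ≤ (vOp L : Submodule R (FractionRing R)))
      {J : FracId R | J ≠ 0 ∧ (J : Submodule R (FractionRing R)).FG ∧ J ≤ I} := by
    rintro J ⟨hJ, hJfg, hJI⟩ L ⟨hL, hLfg, hLI⟩
    refine ⟨J ⊔ L, ⟨ne_bot_of_le_ne_bot hJ le_sup_left, ?_, sup_le hJI hLI⟩,
      vOp_mono hJ le_sup_left, vOp_mono hL le_sup_right⟩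
    rw [coe_sup]
    exact hJfg.sup hLfg
  rw [tOp, ← sSup_image, Submodule.mem_sSup_of_directed (hne.image _) (directedOn_image.2 hdir)]
  simp only [Set.exists_mem_image, Set.mem_ofPred_eq, and_assoc, FractionalIdeal.mem_coe]

theorem mem_tOp_coeIdeal_iff {I : Ideal R} (hI : I ≠ ⊥) {x : FractionRing R} :
    x ∈ tOp (I : FracId R) ↔ ∃ J ≤ I, J ≠ ⊥ ∧ J.FG ∧ x ∈ vOp (J : FracId R) := by
  have hinj := IsFractionRing.injective R (FractionRing R)
  rw [mem_tOp_iff (coeIdeal_ne_zero.2 hI)]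
  constructor
  · rintro ⟨J, h0, hfg, hle, hx⟩
    obtain ⟨J, rfl⟩ := le_one_iff_exists_coeIdeal.1 (hle.trans coeIdeal_le_one)
    exact ⟨J, (coeIdeal_le_coeIdeal _).1 hle, coeIdeal_ne_zero.1 h0,
      (coeIdeal_fg _ hinj J).1 hfg, hx⟩
  · rintro ⟨J, hle, h0, hfg, hx⟩
    exact ⟨J, coeIdeal_ne_zero.2 h0, (coeIdeal_fg _ hinj J).2 hfg,
      (coeIdeal_le_coeIdeal _).2 hle, hx⟩

theorem vOp_coeIdeal_le_one {J : Ideal R} (hJ : J ≠ ⊥) : vOp (J : FracId R) ≤ 1 :=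
  (vOp_mono (coeIdeal_ne_zero.2 hJ) coeIdeal_le_one).trans_eq vOp_one

theorem tOp_coeIdeal_le_one {I : Ideal R} (hI : I ≠ ⊥) :
    tOp (I : FracId R) ≤ ((1 : FracId R) : Submodule R (FractionRing R)) := by
  intro x hx
  obtain ⟨J, -, h0, -, hx⟩ := (mem_tOp_coeIdeal_iff hI).1 hx
  exact vOp_coeIdeal_le_one h0 hx

theorem isTIdeal_iff {I : Ideal R} :
    IsTIdeal I ↔ I ≠ ⊥ ∧ ∀ J ≤ I, J ≠ ⊥ → J.FG → vOp (J : FracId R) ≤ I := by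
  refine and_congr_right fun hI => ⟨fun h J hJ h0 hfg x hx => ?_, fun h => ?_⟩
  · rw [← mem_coe, ← h]
    exact (mem_tOp_coeIdeal_iff hI).2 ⟨J, hJ, h0, hfg, hx⟩
  · refine le_antisymm (fun x hx => ?_) (le_tOp _)
    obtain ⟨J, hJ, h0, hfg, hx⟩ := (mem_tOp_coeIdeal_iff hI).1 hx
    exact h J hJ h0 hfg hx

/-- Glaz–Vasconcelos ideals: the finitely generated ideals `J` with `J⁻¹ = R`, which are exactly
the finitely generated ideals with `J^v = R`. -/
def IsGVIdeal (J : Ideal R) : Prop :=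
  J.FG ∧ (J : FracId R)⁻¹ = 1

/-- The ideal `I` contains no Glaz–Vasconcelos ideal. For `I ≠ ⊥` this says that the `t`-closure
of `I` is proper. -/
def IsTProper (I : Ideal R) : Prop :=
  ∀ J ≤ I, ¬ IsGVIdeal J

theorem isGVIdeal_iff {J : Ideal R} :
    IsGVIdeal J ↔ J.FG ∧ J ≠ ⊥ ∧
      ∀ y : FractionRing R, J ≤ denominatorIdeal R y → denominatorIdeal R y = ⊤ := by
  refine and_congr_right fun hfg => ?_
  obtain rfl | hJ := eq_or_ne J ⊥
  · simp [FractionalIdeal.inv_zero']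
  have hle : (1 : FracId R) ≤ (J : FracId R)⁻¹ := by
    rw [FractionalIdeal.inv_eq, le_div_iff_mul_le (coeIdeal_ne_zero.2 hJ), one_mul]
    exact coeIdeal_le_one
  simp only [← hle.ge_iff_eq', SetLike.le_def, mem_inv_coeIdeal_iff hJ,
    FractionalIdeal.mem_one_iff, denominatorIdeal_eq_top_iff, hJ, ne_eq, not_false_eq_true,
    true_and]

theorem IsGVIdeal.fg {J : Ideal R} (hJ : IsGVIdeal J) : J.FG :=
  hJ.1

theorem IsGVIdeal.ne_bot {J : Ideal R} (hJ : IsGVIdeal J) : J ≠ ⊥ :=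
  (isGVIdeal_iff.1 hJ).2.1

theorem IsGVIdeal.denominatorIdeal_eq_top {J : Ideal R} (hJ : IsGVIdeal J) {y : FractionRing R}
    (h : J ≤ denominatorIdeal R y) : denominatorIdeal R y = ⊤ :=
  (isGVIdeal_iff.1 hJ).2.2 y h

theorem isGVIdeal_top : IsGVIdeal (⊤ : Ideal R) :=
  isGVIdeal_iff.2 ⟨⟨{1}, by simp⟩, top_ne_bot, fun _ => top_unique⟩

theorem IsGVIdeal.mono {I J : Ideal R} (hI : IsGVIdeal I) (hIJ : I ≤ J) (hJ : J.FG) :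
    IsGVIdeal J :=
  isGVIdeal_iff.2 ⟨hJ, ne_bot_of_le_ne_bot hI.ne_bot hIJ,
    fun _ h => hI.denominatorIdeal_eq_top (hIJ.trans h)⟩

theorem IsGVIdeal.mul {I J : Ideal R} (hI : IsGVIdeal I) (hJ : IsGVIdeal J) :
    IsGVIdeal (I * J) := by
  refine isGVIdeal_iff.2 ⟨hI.fg.mul hJ.fg, mul_ne_zero hI.ne_bot hJ.ne_bot, fun y hy => ?_⟩
  refine hI.denominatorIdeal_eq_top fun i hi => ?_
  have htop : denominatorIdeal R (algebraMap R (FractionRing R) i * y) = ⊤ :=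
    hJ.denominatorIdeal_eq_top fun j hj =>
      mem_denominatorIdeal_algebraMap_mul.2 (hy (mul_comm i j ▸ Ideal.mul_mem_mul hi hj))
  rw [Ideal.eq_top_iff_one, mem_denominatorIdeal_algebraMap_mul, one_mul] at htop
  exact htop

theorem IsGVIdeal.vOp_eq_one {J : Ideal R} (hJ : IsGVIdeal J) : vOp (J : FracId R) = 1 := by
  rw [vOp, ← FractionalIdeal.inv_eq (I := (J : FracId R)), hJ.2, FractionalIdeal.div_one]

theorem isGVIdeal_iff_one_mem_vOp {J : Ideal R} (h0 : J ≠ ⊥) (hfg : J.FG) :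
    IsGVIdeal J ↔ 1 ∈ vOp (J : FracId R) := by
  simp_rw [← map_one (algebraMap R (FractionRing R)), algebraMap_mem_vOp_coeIdeal_iff h0,
    isGVIdeal_iff, Ideal.eq_top_iff_one]
  tauto

theorem tOp_coeIdeal_eq_one_iff {I : Ideal R} (hI : I ≠ ⊥) :
    tOp (I : FracId R) = ((1 : FracId R) : Submodule R (FractionRing R)) ↔ ¬ IsTProper I := by
  simp only [IsTProper, not_forall, not_not]
  constructor
  · intro h
    obtain ⟨J, hJ, h0, hfg, h1⟩ := (mem_tOp_coeIdeal_iff hI).1 (h.ge (one_mem_one _))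
    exact ⟨J, hJ, (isGVIdeal_iff_one_mem_vOp h0 hfg).2 h1⟩
  · rintro ⟨J, hJ, hGV⟩
    refine (tOp_coeIdeal_le_one hI).antisymm fun x hx => ?_
    exact (mem_tOp_coeIdeal_iff hI).2 ⟨J, hJ, hGV.ne_bot, hGV.fg, hGV.vOp_eq_one ▸ hx⟩

theorem IsTProper.ne_top {I : Ideal R} (hI : IsTProper I) : I ≠ ⊤ := by
  rintro rfl
  exact hI ⊤ le_rfl isGVIdeal_top

theorem IsTIdeal.isTProper {I : Ideal R} (hI : IsTIdeal I) (h : I ≠ ⊤) : IsTProper I := by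
  intro J hJ hGV
  have hle := (isTIdeal_iff.1 hI).2 J hJ hGV.ne_bot hGV.fg
  rw [hGV.vOp_eq_one, ← coeIdeal_top, coeIdeal_le_coeIdeal, top_le_iff] at hle
  exact h hle

theorem IsTProper.exists_le_maximal {I : Ideal R} (hI : IsTProper I) :
    ∃ M, I ≤ M ∧ Maximal IsTProper M := by
  refine zorn_le_nonempty₀ {I : Ideal R | IsTProper I} (fun c hc hchain J hJ => ?_) I hI
  refine ⟨sSup c, fun L hL hGV => ?_, fun z hz => le_sSup hz⟩
  obtain ⟨N, hN, hLN⟩ := (CompleteLattice.isCompactElement_iff_le_of_directed_sSup_le _ L).1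
    ((Submodule.fg_iff_compact L).1 hGV.fg) c ⟨J, hJ⟩ hchain.directedOn hL
  exact hc hN L hLN hGV

theorem IsTProper.sup_span_singleton {M J : Ideal R} (hM : IsTProper M) (hJM : J ≤ M)
    (h0 : J ≠ ⊥) (hfg : J.FG) {r : R}
    (hr : algebraMap R (FractionRing R) r ∈ vOp (J : FracId R)) :
    IsTProper (M ⊔ Ideal.span {r}) := by
  intro L hL hGV
  obtain ⟨J', hJ', hfg', hle⟩ := exists_fg_le_sup_of_le_sup hGV.fg hL
  refine hM (J ⊔ J') (sup_le hJM hJ') (isGVIdeal_iff.2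
    ⟨Submodule.FG.sup hfg hfg', ne_bot_of_le_ne_bot h0 le_sup_left, fun y hy => ?_⟩)
  refine hGV.denominatorIdeal_eq_top (hle.trans (sup_le (le_sup_right.trans hy) ?_))
  rw [Ideal.span_singleton_le_iff_mem]
  exact (algebraMap_mem_vOp_coeIdeal_iff h0).1 hr y (le_sup_left.trans hy)

theorem isTIdeal_of_maximal_isTProper {M : Ideal R} (h0 : M ≠ ⊥) (hM : Maximal IsTProper M) :
    IsTIdeal M := by
  refine isTIdeal_iff.2 ⟨h0, fun J hJM hJ0 hfg x hx => ?_⟩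
  obtain ⟨r, rfl⟩ := (FractionalIdeal.mem_one_iff _).1 (vOp_coeIdeal_le_one hJ0 hx)
  have hle := hM.le_of_ge (hM.prop.sup_span_singleton hJM hJ0 hfg hx) le_sup_left
  exact mem_coeIdeal_of_mem _ (hle (Submodule.mem_sup_right (Ideal.mem_span_singleton_self r)))

theorem isMaxTIdeal_iff {M : Ideal R} : IsMaxTIdeal M ↔ M ≠ ⊥ ∧ Maximal IsTProper M := by
  constructor
  · rintro ⟨htop, hM, hmax⟩
    obtain ⟨N, hMN, hN⟩ := (hM.isTProper htop).exists_le_maximal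
    have hN' := isTIdeal_of_maximal_isTProper (ne_bot_of_le_ne_bot hM.1 hMN) hN
    exact ⟨hM.1, hmax N hN.prop.ne_top hN' hMN ▸ hN⟩
  · rintro ⟨h0, hM⟩
    exact ⟨hM.prop.ne_top, isTIdeal_of_maximal_isTProper h0 hM, fun J hJ hJt hMJ =>
      (hM.eq_of_le (hJt.isTProper hJ) hMJ).symm⟩

theorem IsMaxTIdeal.ne_bot {M : Ideal R} (hM : IsMaxTIdeal M) : M ≠ ⊥ :=
  (isMaxTIdeal_iff.1 hM).1

theorem IsMaxTIdeal.isTProper {M : Ideal R} (hM : IsMaxTIdeal M) : IsTProper M :=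
  (isMaxTIdeal_iff.1 hM).2.prop

theorem IsMaxTIdeal.eq_of_le {M I : Ideal R} (hM : IsMaxTIdeal M) (hI : IsTProper I)
    (h : M ≤ I) : M = I :=
  (isMaxTIdeal_iff.1 hM).2.eq_of_le hI h

theorem IsTProper.exists_isMaxTIdeal_ge {I : Ideal R} (hI : IsTProper I) (h0 : I ≠ ⊥) :
    ∃ M, IsMaxTIdeal M ∧ I ≤ M := by
  obtain ⟨M, hIM, hM⟩ := hI.exists_le_maximal
  exact ⟨M, isMaxTIdeal_iff.2 ⟨ne_bot_of_le_ne_bot h0 hIM, hM⟩, hIM⟩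

theorem isTProper_iff_exists_isMaxTIdeal_ge {I : Ideal R} (h0 : I ≠ ⊥) :
    IsTProper I ↔ ∃ M, IsMaxTIdeal M ∧ I ≤ M :=
  ⟨fun h => h.exists_isMaxTIdeal_ge h0, fun ⟨_, hM, hIM⟩ J hJ => hM.isTProper J (hJ.trans hIM)⟩

theorem IsMaxTIdeal.exists_isGVIdeal_sup_span_singleton {M : Ideal R} (hM : IsMaxTIdeal M)
    {a : R} (ha : a ∉ M) : ∃ J ≤ M, IsGVIdeal (J ⊔ Ideal.span {a}) := by
  have hsup : ¬ IsTProper (M ⊔ Ideal.span {a}) := fun h => ha <| by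
    rw [hM.eq_of_le h le_sup_left]
    exact Submodule.mem_sup_right (Ideal.mem_span_singleton_self a)
  simp only [IsTProper, not_forall, not_not] at hsup
  obtain ⟨L, hL, hGV⟩ := hsup
  obtain ⟨J, hJ, hJfg, hle⟩ := exists_fg_le_sup_of_le_sup hGV.fg hL
  exact ⟨J, hJ, hGV.mono hle (Submodule.FG.sup hJfg (Submodule.fg_span_singleton a))⟩

theorem IsMaxTIdeal.isPrime {M : Ideal R} (hM : IsMaxTIdeal M) : M.IsPrime := by
  refine ⟨hM.1, fun {a b} hab => ?_⟩
  by_contra! h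
  obtain ⟨J₁, hJ₁, hGV₁⟩ := hM.exists_isGVIdeal_sup_span_singleton h.1
  obtain ⟨J₂, hJ₂, hGV₂⟩ := hM.exists_isGVIdeal_sup_span_singleton h.2
  refine hM.isTProper _ ?_ (hGV₁.mul hGV₂)
  rw [Ideal.sup_mul, Ideal.mul_sup, Ideal.mul_sup, Ideal.span_singleton_mul_span_singleton]
  exact sup_le (sup_le (Ideal.mul_le_left.trans hJ₁) (Ideal.mul_le_left.trans hJ₁))
    (sup_le (Ideal.mul_le_right.trans hJ₂) ((Ideal.span_singleton_le_iff_mem _).2 hab))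

theorem denominatorIdeal_eq_top_of_forall_isMaxTIdeal {y : FractionRing R}
    (h : ∀ M, IsMaxTIdeal M → ¬ denominatorIdeal R y ≤ M) : denominatorIdeal R y = ⊤ := by
  have hy := mt (isTProper_iff_exists_isMaxTIdeal_ge (denominatorIdeal_ne_bot y)).1
    fun ⟨M, hM, hle⟩ => h M hM hle
  simp only [IsTProper, not_forall, not_not] at hy
  obtain ⟨J, hJ, hGV⟩ := hy
  exact hGV.denominatorIdeal_eq_top hJ

end TIdeals

section Localization

variable {R : Type*} [CommRing R]

section

variable (S : Submonoid R) {A : Type*} [CommRing A] [Algebra R A] [IsLocalization S A]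

include S in
theorem exists_fg_map_eq {𝔞 : Ideal A} (h : 𝔞.FG) :
    ∃ I : Ideal R, I.FG ∧ I.map (algebraMap R A) = 𝔞 := by
  induction 𝔞, h using Submodule.fg_induction with
  | singleton x =>
    obtain ⟨r, s, rfl⟩ := IsLocalization.exists_mk'_eq S x
    refine ⟨Ideal.span {r}, Submodule.fg_span_singleton r, ?_⟩
    rw [Ideal.map_span, Set.image_singleton, ← IsLocalization.mk'_spec A r s,
      Ideal.span_singleton_mul_right_unit (IsLocalization.map_units A s)]
  | sup 𝔞 𝔟 _ _ ha hb =>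
    obtain ⟨I, hI, rfl⟩ := ha
    obtain ⟨J, hJ, rfl⟩ := hb
    exact ⟨I ⊔ J, Submodule.FG.sup hI hJ, Ideal.map_sup _ _ _⟩

theorem map_le_map_iff_of_fg {I J : Ideal R} (hI : I.FG) :
    I.map (algebraMap R A) ≤ J.map (algebraMap R A) ↔ ∃ s ∈ S, ∀ i ∈ I, s * i ∈ J := by
  rw [Ideal.map_le_iff_le_comap]
  refine ⟨fun h => ?_, fun ⟨s, hs, h⟩ i hi =>
    (IsLocalization.algebraMap_mem_map_algebraMap_iff S A J i).2 ⟨s, hs, h i hi⟩⟩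
  induction I, hI using Submodule.fg_induction with
  | singleton x =>
    obtain ⟨s, hs, hx⟩ := (IsLocalization.algebraMap_mem_map_algebraMap_iff S A J x).1
      (h (Ideal.mem_span_singleton_self x))
    refine ⟨s, hs, fun i hi => ?_⟩
    obtain ⟨c, rfl⟩ := Ideal.mem_span_singleton'.1 hi
    rw [mul_left_comm]
    exact J.mul_mem_left c hx
  | sup I₁ I₂ _ _ h₁ h₂ =>
    obtain ⟨s₁, hs₁, hI₁⟩ := h₁ (le_sup_left.trans h)
    obtain ⟨s₂, hs₂, hI₂⟩ := h₂ (le_sup_right.trans h)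
    refine ⟨s₁ * s₂, mul_mem hs₁ hs₂, fun i hi => ?_⟩
    obtain ⟨i₁, hi₁, i₂, hi₂, rfl⟩ := Submodule.mem_sup.1 hi
    have heq : s₁ * s₂ * (i₁ + i₂) = s₂ * (s₁ * i₁) + s₁ * (s₂ * i₂) := by ring
    rw [heq]
    exact add_mem (J.mul_mem_left _ (hI₁ _ hi₁)) (J.mul_mem_left _ (hI₂ _ hi₂))

include S in
theorem isPrincipal_map_iff {I : Ideal R} :
    (I.map (algebraMap R A)).IsPrincipal ↔
      ∃ a ∈ I, I.map (algebraMap R A) ≤ (Ideal.span {a}).map (algebraMap R A) := by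
  constructor
  · rintro ⟨g, hg⟩
    have hgI : g ∈ I.map (algebraMap R A) := hg ▸ Submodule.mem_span_singleton_self g
    obtain ⟨⟨⟨a, ha⟩, s⟩, hs⟩ := (IsLocalization.mem_map_algebraMap_iff S A).1 hgI
    refine ⟨a, ha, hg.le.trans ?_⟩
    rw [Submodule.span_singleton_le_iff_mem, IsLocalization.mem_map_algebraMap_iff S A]
    exact ⟨⟨⟨a, Ideal.mem_span_singleton_self a⟩, s⟩, hs⟩
  · rintro ⟨a, ha, hle⟩
    rw [hle.antisymm (Ideal.map_mono ((Ideal.span_singleton_le_iff_mem _).2 ha)), Ideal.map_span,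
      Set.image_singleton]
    exact ⟨_, rfl⟩

theorem algebraMap_dvd_algebraMap_iff {a b : R} :
    algebraMap R A a ∣ algebraMap R A b ↔ ∃ s ∈ S, a ∣ s * b := by
  rw [← Ideal.mem_span_singleton, ← Set.image_singleton, ← Ideal.map_span,
    IsLocalization.algebraMap_mem_map_algebraMap_iff S]
  simp only [Ideal.mem_span_singleton]

end

section AtPrime

theorem HeightOnePrime.maximalIdeal_le_radical {P : Ideal R} [P.IsPrime] (hP : HeightOnePrime P)
    {𝔞 : Ideal (Localization.AtPrime P)} (h𝔞 : 𝔞 ≠ ⊥) :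
    IsLocalRing.maximalIdeal (Localization.AtPrime P) ≤ 𝔞.radical := by
  rw [Ideal.radical_eq_sInf]
  refine le_sInf fun 𝔮 ⟨h𝔞𝔮, h𝔮⟩ => ?_
  have hle : 𝔮.under R ≤ P :=
    (Ideal.comap_mono (IsLocalRing.le_maximalIdeal h𝔮.ne_top)).trans_eq
      Localization.AtPrime.under_maximalIdeal
  have heq : 𝔮.under R = P := by
    refine hle.eq_of_not_lt fun hlt => h𝔞 (le_bot_iff.1 (h𝔞𝔮.trans_eq ?_))
    rw [← IsLocalization.map_under P.primeCompl _ 𝔮, hP.2.2 _ inferInstance hlt, Ideal.map_bot]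
  exact (Localization.AtPrime.eq_maximalIdeal_iff_under_eq.1 heq).ge

variable [IsDomain R]

theorem mul_inv_coeIdeal_le_iff {I J : Ideal R} (h0 : I ≠ ⊥) :
    (I : FracId R) * (I : FracId R)⁻¹ ≤ J ↔
      ∀ i ∈ I, ∀ y : FractionRing R, I ≤ denominatorIdeal R y →
        ∃ r ∈ J, algebraMap R (FractionRing R) r = algebraMap R (FractionRing R) i * y := by
  simp only [FractionalIdeal.mul_le, mem_coeIdeal, mem_inv_coeIdeal_iff h0, forall_exists_index,
    and_imp, forall_apply_eq_imp_iff₂]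

theorem isPrincipal_map_atPrime_iff {I P : Ideal R} [P.IsPrime] (h0 : I ≠ ⊥) (hI : I.FG) :
    (I.map (algebraMap R (Localization.AtPrime P))).IsPrincipal ↔
      ¬ (I : FracId R) * (I : FracId R)⁻¹ ≤ P := by
  simp only [isPrincipal_map_iff P.primeCompl, map_le_map_iff_of_fg P.primeCompl hI,
    Ideal.mem_span_singleton, mul_inv_coeIdeal_le_iff h0, not_forall, exists_prop]
  refine exists_congr fun a => and_congr_right fun ha => ?_
  constructor
  · rintro ⟨s, hs, hdvd⟩
    have ha0 : a ≠ 0 := by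
      obtain ⟨i, hi, hi0⟩ := Submodule.exists_mem_ne_zero_of_ne_bot h0
      rintro rfl
      exact mul_ne_zero (ne_of_mem_of_not_mem P.zero_mem hs).symm hi0 (zero_dvd_iff.1 (hdvd i hi))
    have ha0' : algebraMap R (FractionRing R) a ≠ 0 := by simpa using ha0
    refine ⟨algebraMap R _ s / algebraMap R _ a, fun i hi => ?_, fun ⟨r, hr, har⟩ => hs ?_⟩
    · obtain ⟨c, hc⟩ := hdvd i hi
      refine mem_denominatorIdeal.2 ⟨c, ?_⟩
      rw [← mul_div_assoc, ← map_mul, mul_comm i, hc, map_mul, mul_div_cancel_left₀ _ ha0']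
    · rw [mul_div_cancel₀ _ ha0'] at har
      exact IsFractionRing.injective R (FractionRing R) har ▸ hr
  · rintro ⟨y, hy, hay⟩
    obtain ⟨r, hr⟩ := mem_denominatorIdeal.1 (hy ha)
    refine ⟨r, fun hrP => hay ⟨r, hrP, hr⟩, fun i hi => ?_⟩
    obtain ⟨c, hc⟩ := mem_denominatorIdeal.1 (hy hi)
    refine ⟨c, IsFractionRing.injective R (FractionRing R) ?_⟩
    rw [map_mul, map_mul, hc, hr]
    ring

theorem isTInvertible_iff {I : Ideal R} (h0 : I ≠ ⊥) (hI : I.FG) :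
    IsTInvertible I ↔ ∀ (M : Ideal R) [M.IsPrime], IsMaxTIdeal M →
      (I.map (algebraMap R (Localization.AtPrime M))).IsPrincipal := by
  obtain ⟨C, hC⟩ := le_one_iff_exists_coeIdeal.1 (mul_one_div_le_one (I := (I : FracId R)))
  rw [← FractionalIdeal.inv_eq] at hC
  have hC0 : C ≠ ⊥ := by
    rw [← coeIdeal_ne_zero (K := FractionRing R), hC]
    exact (bot_lt_mul_inv (coeIdeal_ne_zero.2 h0)).ne'
  rw [IsTInvertible, ← FractionalIdeal.inv_eq, ← hC, tOp_coeIdeal_eq_one_iff hC0,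
    isTProper_iff_exists_isMaxTIdeal_ge hC0, and_iff_right h0]
  push Not
  refine forall_congr' fun M => ⟨fun h _ hM => ?_, fun h hM => ?_⟩
  · rw [isPrincipal_map_atPrime_iff h0 hI, ← hC, coeIdeal_le_coeIdeal]
    exact h hM
  · have := hM.isPrime
    rw [← coeIdeal_le_coeIdeal (FractionRing R), hC, ← isPrincipal_map_atPrime_iff h0 hI]
    exact h hM

theorem IsTInvertible.isPrincipal_map {I M : Ideal R} [M.IsPrime] (hI : IsTInvertible I)
    (hfg : I.FG) (hM : IsMaxTIdeal M) :
    (I.map (algebraMap R (Localization.AtPrime M))).IsPrincipal :=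
  (isTInvertible_iff hI.1 hfg).1 hI M hM

theorem isPvMD_iff : IsPvMD R ↔
    ∀ (M : Ideal R) [M.IsPrime], IsMaxTIdeal M → ValuationRing (Localization.AtPrime M) := by
  refine ⟨fun h M _ hM => ?_, fun h I h0 hI => (isTInvertible_iff h0 hI).2 fun M _ hM => ?_⟩
  · have : IsBezout (Localization.AtPrime M) := ⟨fun 𝔞 h𝔞 => by
      obtain ⟨I, hI, rfl⟩ := exists_fg_map_eq M.primeCompl h𝔞
      obtain rfl | h0 := eq_or_ne I ⊥
      · rw [Ideal.map_bot]
        exact bot_isPrincipal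
      · exact (h I h0 hI).isPrincipal_map hI hM⟩
    infer_instance
  · have := h M hM
    exact IsBezout.isPrincipal_of_FG _ (hI.map _)

theorem isTProper_of_valuationRing (P : Ideal R) [P.IsPrime]
    [ValuationRing (Localization.AtPrime P)] : IsTProper P := by
  intro J hJ hGV
  refine (isPrincipal_map_atPrime_iff (P := P) hGV.ne_bot hGV.fg).1
    (IsBezout.isPrincipal_of_FG _ (hGV.fg.map _)) ?_
  rw [hGV.2, mul_one]
  exact (coeIdeal_le_coeIdeal _).2 hJ

end AtPrime

end Localization

section LocalDomain

variable {A : Type*} [CommRing A] [IsDomain A] [IsLocalRing A]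

theorem dvd_or_dvd_of_isPrincipal_span_pair {a b : A} (h : (Ideal.span {a, b}).IsPrincipal) :
    a ∣ b ∨ b ∣ a := by
  obtain ⟨d, hd : Ideal.span {a, b} = Ideal.span {d}⟩ := h
  obtain ⟨a, rfl⟩ := Ideal.mem_span_singleton.1 (hd.le (Ideal.subset_span (by simp)) : a ∈ _)
  obtain ⟨b, rfl⟩ := Ideal.mem_span_singleton.1 (hd.le (Ideal.subset_span (by simp)) : b ∈ _)
  obtain rfl | hd0 := eq_or_ne d 0
  · simp
  obtain ⟨u, v, huv⟩ := Ideal.mem_span_pair.1 (hd.ge (Ideal.mem_span_singleton_self d))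
  have hone : u * a + v * b = 1 := mul_left_cancel₀ hd0 (by linear_combination huv)
  refine (IsLocalRing.isUnit_or_isUnit_of_add_one hone).imp (fun h => ?_) fun h => ?_
  · exact mul_dvd_mul_left d (isUnit_of_mul_isUnit_right h).dvd
  · exact mul_dvd_mul_left d (isUnit_of_mul_isUnit_right h).dvd

theorem dvd_or_dvd_of_dvd_pow {x : A} (h : ∀ 𝔞 : Ideal A, 𝔞.FG → x ∈ 𝔞 → 𝔞.IsPrincipal) {n : ℕ}
    {a b : A} (hb : b ≠ 0) (hbx : b ∣ x ^ n) : a ∣ b ∨ b ∣ a := by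
  have hpair {c d : A} (hd : d ∣ x) : c ∣ d ∨ d ∣ c :=
    dvd_or_dvd_of_isPrincipal_span_pair
      (h _ (Submodule.fg_span (Set.toFinite _))
        (Ideal.mem_of_dvd _ hd (Ideal.subset_span (by simp))))
  induction n generalizing a b with
  | zero => exact Or.inr ((isUnit_of_dvd_one (by simpa using hbx)).dvd)
  | succ n ih =>
    obtain hxb | ⟨b, rfl⟩ := hpair (c := b) (dvd_refl x)
    · exact hpair hxb
    have hx0 := left_ne_zero_of_mul hb
    obtain hax | ⟨a, rfl⟩ := hpair (c := a) (dvd_refl x)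
    · exact Or.inl (hax.mul_right b)
    rw [pow_succ', mul_dvd_mul_iff_left hx0] at hbx
    simpa only [mul_dvd_mul_iff_left hx0] using ih (right_ne_zero_of_mul hb) hbx

theorem pow_dvd_of_mem_of_notMem {x : A} (h : ∀ 𝔞 : Ideal A, 𝔞.FG → x ∈ 𝔞 → 𝔞.IsPrincipal)
    {𝔭 : Ideal A} [h𝔭 : 𝔭.IsPrime] (hx : x ∉ 𝔭) {a : A} (ha : a ∈ 𝔭) (n : ℕ) : x ^ n ∣ a := by
  induction n with
  | zero => exact pow_zero x ▸ one_dvd a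
  | succ n ih =>
    obtain ⟨c, rfl⟩ := ih
    have hc : c ∈ 𝔭 := (h𝔭.mem_or_mem ha).resolve_left (mt (h𝔭.mem_of_pow_mem n) hx)
    have hxc : x ∣ c ∨ c ∣ x := dvd_or_dvd_of_isPrincipal_span_pair
      (h _ (Submodule.fg_span (Set.toFinite _)) (Ideal.subset_span (by simp)))
    rw [pow_succ]
    exact mul_dvd_mul_left _ (hxc.resolve_right fun hcx => hx (𝔭.mem_of_dvd hcx hc))

end LocalDomain

section SuperRigid

variable {R : Type*} [CommRing R] [IsDomain R]

theorem IsTSuperRigid.isPrincipal_of_map_le {I M : Ideal R} [M.IsPrime] (hI : IsTSuperRigid I)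
    (hM : IsMaxTIdeal M) {𝔞 : Ideal (Localization.AtPrime M)} (h𝔞 : 𝔞.FG)
    (hle : I.map (algebraMap R (Localization.AtPrime M)) ≤ 𝔞) : 𝔞.IsPrincipal := by
  obtain ⟨J, hJ, rfl⟩ := exists_fg_map_eq M.primeCompl h𝔞
  have hfg : (I ⊔ J).FG := Submodule.FG.sup hI.1.2.1 hJ
  rw [← sup_eq_right.2 hle, ← Ideal.map_sup]
  exact (hI.2 _ hfg le_sup_left).isPrincipal_map hfg hM

theorem IsTSuperRigid.exists_map_eq_span_singleton {I M : Ideal R} [M.IsPrime]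
    (hI : IsTSuperRigid I) (hM : IsMaxTIdeal M) :
    ∃ g, I.map (algebraMap R (Localization.AtPrime M)) = Ideal.span {g} ∧
      ∀ 𝔞 : Ideal (Localization.AtPrime M), 𝔞.FG → g ∈ 𝔞 → 𝔞.IsPrincipal := by
  obtain ⟨g, hg⟩ := hI.isPrincipal_of_map_le hM (hI.1.2.1.map _) le_rfl
  exact ⟨g, hg, fun 𝔞 h𝔞 hg𝔞 =>
    hI.isPrincipal_of_map_le hM h𝔞 (hg.trans_le ((Submodule.span_singleton_le_iff_mem _ _).2 hg𝔞))⟩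

theorem IsTSuperRigid.valuationRing {I M : Ideal R} [M.IsPrime] (hI : IsTSuperRigid I)
    (hIM : I ≤ M) (hM : IsMaxTIdeal M) (hht : HeightOnePrime M) :
    ValuationRing (Localization.AtPrime M) := by
  obtain ⟨g, hg, hprincipal⟩ := hI.exists_map_eq_span_singleton hM
  have hgmax : g ∈ IsLocalRing.maximalIdeal (Localization.AtPrime M) := by
    rw [← Ideal.span_singleton_le_iff_mem, ← hg,
      ← Localization.AtPrime.map_eq_maximalIdeal (I := M)]
    exact Ideal.map_mono hIM
  refine ValuationRing.iff_dvd_total.2 ⟨fun a b => ?_⟩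
  obtain rfl | hb := eq_or_ne b 0
  · exact Or.inl (dvd_zero a)
  obtain ⟨n, hn⟩ := hht.maximalIdeal_le_radical (mt Ideal.span_singleton_eq_bot.1 hb) hgmax
  exact dvd_or_dvd_of_dvd_pow hprincipal hb (Ideal.mem_span_singleton.1 hn)

theorem TSuperPotentDomain.isPvMD (hR : TSuperPotentDomain R) (hdim : TDimensionOne R) :
    IsPvMD R := by
  refine isPvMD_iff.2 fun M _ hM => ?_
  obtain ⟨-, I, hI, hIM⟩ := hR M hM
  exact hI.valuationRing hIM hM (hdim M hM)

theorem TSuperPotentDomain.tPotentDomain (hR : TSuperPotentDomain R) : TPotentDomain R :=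
  fun M hM => ⟨hM, (hR M hM).2.imp fun _ hI => ⟨hI.1.1, hI.2⟩⟩

theorem TPotentDomain.tSuperPotentDomain (hR : TPotentDomain R) (hPvMD : IsPvMD R) :
    TSuperPotentDomain R := by
  intro M hM
  obtain ⟨-, I, hI, hIM⟩ := hR M hM
  exact ⟨hM, I, ⟨hI, fun J hJ hIJ => hPvMD J (ne_bot_of_le_ne_bot hI.1 hIJ) hJ⟩, hIM⟩

end SuperRigid

section FiniteTCharacter

variable {R : Type*} [CommRing R]

/-- The ideal of the elements lying in all but finitely many members of `𝓢`. Finite character of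
`𝓢` is tested on it: it contains a finitely generated ideal lying in no member of `𝓢` only if `𝓢`
is finite. -/
def cofiniteInf (𝓢 : Set (Ideal R)) : Ideal R where
  carrier := {r | {N ∈ 𝓢 | r ∉ N}.Finite}
  zero_mem' := by simp
  add_mem' {r s} hr hs := (hr.union hs).subset fun N ⟨hN, hrs⟩ => by
    by_contra! h
    simp only [Set.mem_union, Set.mem_ofPred_eq, hN, true_and, not_or, not_not] at h
    exact hrs (N.add_mem h.1 h.2)
  smul_mem' c _ hr := hr.subset fun N ⟨hN, hcr⟩ => ⟨hN, fun h => hcr (N.mul_mem_left c h)⟩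

theorem mem_cofiniteInf {𝓢 : Set (Ideal R)} {r : R} :
    r ∈ cofiniteInf 𝓢 ↔ {N ∈ 𝓢 | r ∉ N}.Finite :=
  Iff.rfl

theorem finite_setOf_not_le_of_le_cofiniteInf {𝓢 : Set (Ideal R)} {J : Ideal R} (hJ : J.FG)
    (hle : J ≤ cofiniteInf 𝓢) : {N ∈ 𝓢 | ¬ J ≤ N}.Finite := by
  obtain ⟨T, rfl⟩ := hJ
  refine (T.finite_toSet.biUnion fun t ht =>
    mem_cofiniteInf.1 (hle (Ideal.subset_span ht))).subset ?_
  rintro N ⟨hN, hTN⟩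
  obtain ⟨t, ht, htN⟩ := Set.not_subset.1 (mt Ideal.span_le.2 hTN)
  exact Set.mem_biUnion ht ⟨hN, htN⟩

theorem exists_fg_le_of_finite_setOf_mem {𝓟 : Set (Ideal R)} (h𝓟 : ∀ P ∈ 𝓟, P.IsPrime)
    {I : Ideal R} {a : R} (ha : a ∈ I) (hfin : {P ∈ 𝓟 | a ∈ P}.Finite) :
    ∃ J ≤ I, a ∈ J ∧ J.FG ∧ ∀ P ∈ 𝓟, J ≤ P → I ≤ P := by
  obtain ⟨b, hb, hbP⟩ : ∃ b ∈ I, b ∉ ⋃ P ∈ {P ∈ 𝓟 | a ∈ P ∧ ¬ I ≤ P}, (P : Set R) := by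
    refine Set.not_subset.1 ((Ideal.subset_union_prime_finite (f := id) (hfin.subset ?_) ⊤ ⊤
      fun P hP _ _ => h𝓟 P hP.1).not.2 ?_)
    · exact fun P hP => ⟨hP.1, hP.2.1⟩
    · exact fun ⟨P, hP, hIP⟩ => hP.2.2 hIP
  refine ⟨Ideal.span {a, b}, Ideal.span_le.2 (Set.pair_subset ha hb),
    Ideal.subset_span (by simp), Submodule.fg_span (Set.toFinite _), fun P hP hJP => ?_⟩
  by_contra hIP
  exact hbP (Set.mem_biUnion ⟨hP, hJP (Ideal.subset_span (by simp)), hIP⟩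
    (hJP (Ideal.subset_span (by simp))))

variable [IsDomain R]

theorem HeightOnePrime.exists_dvd_mul {P I : Ideal R} (hP : HeightOnePrime P) (hI : I.FG)
    (hIP : I ≤ P) {a : R} (ha : a ≠ 0) : ∃ n : ℕ, ∃ s ∉ P, ∀ i ∈ I ^ n, a ∣ s * i := by
  have := hP.1
  have hbot : (Ideal.span {a}).map (algebraMap R (Localization.AtPrime P)) ≠ ⊥ :=
    mt (Ideal.map_eq_bot_iff_of_injective (FaithfulSMul.algebraMap_injective _ _)).1
      (mt Ideal.span_singleton_eq_bot.1 ha)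
  have hrad : I.map (algebraMap R (Localization.AtPrime P)) ≤
      ((Ideal.span {a}).map (algebraMap R (Localization.AtPrime P))).radical :=
    ((Ideal.map_mono hIP).trans Localization.AtPrime.map_eq_maximalIdeal.le).trans
      (hP.maximalIdeal_le_radical hbot)
  obtain ⟨n, hn⟩ := Ideal.exists_pow_le_of_le_radical_of_fg hrad (hI.map _)
  rw [← Ideal.map_pow, map_le_map_iff_of_fg P.primeCompl (hI.pow)] at hn
  simp only [Ideal.mem_span_singleton] at hn
  exact ⟨n, hn⟩

/-- Finite `t`-character: every nonzero element lies in only finitely many maximal `t`-ideals. -/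
def FiniteTCharacter (R : Type*) [CommRing R] [IsDomain R] : Prop :=
  ∀ a : R, a ≠ 0 → {M ∈ {M : Ideal R | IsMaxTIdeal M} | a ∈ M}.Finite

theorem finite_of_not_isTProper_cofiniteInf {𝓢 : Set (Ideal R)} (h𝓢 : ∀ N ∈ 𝓢, IsTProper N)
    (h : ¬ IsTProper (cofiniteInf 𝓢)) : 𝓢.Finite := by
  simp only [IsTProper, not_forall, not_not] at h
  obtain ⟨J, hJ, hGV⟩ := h
  exact (finite_setOf_not_le_of_le_cofiniteInf hGV.fg hJ).subset fun N hN =>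
    ⟨hN, fun hJN => h𝓢 N hN J hJN hGV⟩

theorem IsTRigid.eq_of_le {I M N : Ideal R} (hI : IsTRigid I) (hM : IsMaxTIdeal M) (hIM : I ≤ M)
    (hN : IsMaxTIdeal N) (hIN : I ≤ N) : M = N :=
  hI.2.2.unique ⟨hM, hIM⟩ ⟨hN, hIN⟩

theorem IsTRigid.exists_notMem_mem_cofiniteInf {I M : Ideal R} (hI : IsTRigid I)
    (hM : IsMaxTIdeal M) (hIM : I ≤ M) (hht : HeightOnePrime M) {a : R} (ha : a ≠ 0) :
    ∃ s ∉ M, s ∈ cofiniteInf {N ∈ {N : Ideal R | IsMaxTIdeal N} | a ∈ N} := by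
  obtain ⟨n, s, hs, hdvd⟩ := hht.exists_dvd_mul hI.2.1 hIM ha
  refine ⟨s, hs, mem_cofiniteInf.2 ((Set.finite_singleton M).subset ?_)⟩
  rintro N ⟨⟨hN, haN⟩, hsN⟩
  have hNp := hN.isPrime
  have hpow : I ^ n ≤ N := fun i hi =>
    (hNp.mem_or_mem (N.mem_of_dvd (hdvd i hi) haN)).resolve_left hsN
  exact hI.eq_of_le hN (Ideal.IsPrime.le_of_pow_le hpow) hM hIM

theorem TPotentDomain.finiteTCharacter (hR : TPotentDomain R) (hdim : TDimensionOne R) :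
    FiniteTCharacter R := by
  intro a ha
  refine finite_of_not_isTProper_cofiniteInf (fun N hN => hN.1.isTProper) fun hA => ?_
  have hmem : a ∈ cofiniteInf {N ∈ {N : Ideal R | IsMaxTIdeal N} | a ∈ N} := by
    simp [mem_cofiniteInf, and_assoc]
  obtain ⟨M, hM, hAM⟩ := hA.exists_isMaxTIdeal_ge (Submodule.ne_bot_iff _ |>.2 ⟨a, hmem, ha⟩)
  obtain ⟨-, I, hI, hIM⟩ := hR M hM
  obtain ⟨s, hs, hsA⟩ := hI.exists_notMem_mem_cofiniteInf hM hIM (hdim M hM) ha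
  exact hs (hAM hsA)

theorem FiniteTCharacter.tPotentDomain (hR : FiniteTCharacter R) : TPotentDomain R := by
  intro M hM
  obtain ⟨a, ha, ha0⟩ := Submodule.exists_mem_ne_zero_of_ne_bot hM.ne_bot
  obtain ⟨J, hJM, haJ, hJ, hle⟩ :=
    exists_fg_le_of_finite_setOf_mem (fun N hN => IsMaxTIdeal.isPrime hN) ha (hR a ha0)
  refine ⟨hM, J, ⟨(Submodule.ne_bot_iff _).2 ⟨a, haJ, ha0⟩, hJ, M, ⟨hM, hJM⟩, ?_⟩, hJM⟩
  exact fun N ⟨hN, hJN⟩ => (hM.eq_of_le hN.isTProper (hle N hN hJN)).symm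

end FiniteTCharacter

section DefiningFamily

theorem isValuationDomain_iff {A : Type*} [CommRing A] [IsDomain A] :
    IsValuationDomain A ↔ ValuationRing A :=
  ⟨fun h => ValuationRing.iff_dvd_total.2 ⟨h.2⟩, fun _ => ⟨‹_›, ValuationRing.dvd_total⟩⟩

variable {R : Type*} [CommRing R] [IsDomain R]

/-- An essential prime of `R`: a prime `P` such that `R_P` is a valuation domain. -/
def IsEssentialPrime (P : Ideal R) : Prop :=
  ∃ hP : P.IsPrime, IsValuationDomain (Localization (@Ideal.primeCompl R _ P hP))

theorem isEssentialPrime_iff {P : Ideal R} [hP : P.IsPrime] :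
    IsEssentialPrime P ↔ ValuationRing (Localization.AtPrime P) :=
  (exists_prop_of_true hP).trans isValuationDomain_iff

theorem IsEssentialPrime.isTProper {P : Ideal R} (hP : IsEssentialPrime P) : IsTProper P := by
  have := hP.1
  have := isEssentialPrime_iff.1 hP
  exact isTProper_of_valuationRing P

/-- A defining family of `R`: a set `𝓟` of ideals with `R = ⋂_{P ∈ 𝓟} R_P`. -/
def IsDefiningFamily (𝓟 : Set (Ideal R)) : Prop :=
  ∀ x : FractionRing R, (∀ P ∈ 𝓟, MemLocalizationAt P x) ↔
    ∃ r : R, algebraMap R (FractionRing R) r = x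

theorem isDefiningFamily_iff {𝓟 : Set (Ideal R)} :
    IsDefiningFamily 𝓟 ↔ ∀ y : FractionRing R,
      (∀ P ∈ 𝓟, ¬ denominatorIdeal R y ≤ P) ↔ denominatorIdeal R y = ⊤ := by
  simp only [IsDefiningFamily, memLocalizationAt_iff, denominatorIdeal_eq_top_iff]

theorem isDefiningFamily_setOf_isMaxTIdeal : IsDefiningFamily {M : Ideal R | IsMaxTIdeal M} :=
  isDefiningFamily_iff.2 fun _ => ⟨denominatorIdeal_eq_top_of_forall_isMaxTIdeal,
    fun h _ hM hle => hM.1 (top_unique (h ▸ hle))⟩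

theorem IsDefiningFamily.isGVIdeal {𝓟 : Set (Ideal R)} (h𝓟 : IsDefiningFamily 𝓟) {J : Ideal R}
    (hJ : J.FG) (h0 : J ≠ ⊥) (h : ∀ P ∈ 𝓟, ¬ J ≤ P) : IsGVIdeal J :=
  isGVIdeal_iff.2 ⟨hJ, h0, fun y hy =>
    (isDefiningFamily_iff.1 h𝓟 y).1 fun P hP hle => h P hP (hy.trans hle)⟩

theorem IsDefiningFamily.exists_le_of_isTProper {𝓟 : Set (Ideal R)} (h𝓟 : IsDefiningFamily 𝓟)
    (hprime : ∀ P ∈ 𝓟, P.IsPrime) (hfin : ∀ a : R, a ≠ 0 → {P ∈ 𝓟 | a ∈ P}.Finite) {I : Ideal R}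
    (hI : IsTProper I) (h0 : I ≠ ⊥) : ∃ P ∈ 𝓟, I ≤ P := by
  obtain ⟨a, ha, ha0⟩ := Submodule.exists_mem_ne_zero_of_ne_bot h0
  obtain ⟨J, hJI, haJ, hJ, hle⟩ := exists_fg_le_of_finite_setOf_mem hprime ha (hfin a ha0)
  by_contra! h
  exact hI J hJI (h𝓟.isGVIdeal hJ (Submodule.ne_bot_iff _ |>.2 ⟨a, haJ, ha0⟩)
    fun P hP hJP => h P hP (hle P hP hJP))

theorem IsTRigid.mem_of_isDefiningFamily {I M : Ideal R} (hI : IsTRigid I) (hM : IsMaxTIdeal M)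
    (hIM : I ≤ M) (hht : HeightOnePrime M) {𝓟 : Set (Ideal R)} (h𝓟 : IsDefiningFamily 𝓟)
    (hess : ∀ P ∈ 𝓟, IsEssentialPrime P) : M ∈ 𝓟 := by
  by_contra hM𝓟
  refine hM.isTProper I hIM (h𝓟.isGVIdeal hI.2.1 hI.1 fun P hP hIP => ?_)
  have hP0 : P ≠ ⊥ := ne_bot_of_le_ne_bot hI.1 hIP
  obtain ⟨N, hN, hPN⟩ := (hess P hP).isTProper.exists_isMaxTIdeal_ge hP0
  obtain rfl : M = N := hI.eq_of_le hM hIM hN (hIP.trans hPN)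
  obtain rfl | hlt := hPN.eq_or_lt
  · exact hM𝓟 hP
  · exact hP0 (hht.2.2 P (hess P hP).1 hlt)

theorem generalizedKrullDomain_iff :
    GeneralizedKrullDomain R ↔ FiniteTCharacter R ∧ IsPvMD R ∧ TDimensionOne R := by
  constructor
  · rintro ⟨𝓟, hval, h𝓟, hfin⟩
    have hess (P : Ideal R) (hP : P ∈ 𝓟) : IsEssentialPrime P := (hval P hP).imp fun _ => And.right
    have hsub (M : Ideal R) (hM : IsMaxTIdeal M) : M ∈ 𝓟 := by
      obtain ⟨P, hP, hMP⟩ := IsDefiningFamily.exists_le_of_isTProper h𝓟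
        (fun P hP => (hess P hP).1) hfin hM.isTProper hM.ne_bot
      exact hM.eq_of_le (hess P hP).isTProper hMP ▸ hP
    exact ⟨fun a ha => (hfin a ha).subset fun M hM => ⟨hsub M hM.1, hM.2⟩,
      isPvMD_iff.2 fun M _ hM => isEssentialPrime_iff.1 (hess M (hsub M hM)),
      fun M hM => (hval M (hsub M hM)).2.1⟩
  · rintro ⟨hfin, hPvMD, hdim⟩
    refine ⟨{M | IsMaxTIdeal M}, fun M hM => ?_, isDefiningFamily_setOf_isMaxTIdeal, hfin⟩
    have := hM.isPrime
    exact ⟨this, hdim M hM, isValuationDomain_iff.2 (isPvMD_iff.1 hPvMD M hM)⟩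

theorem generalizedKrullDomain_iff_tPotentDomain :
    GeneralizedKrullDomain R ↔ TPotentDomain R ∧ IsPvMD R ∧ TDimensionOne R := by
  rw [generalizedKrullDomain_iff]
  exact and_congr_left fun h =>
    ⟨FiniteTCharacter.tPotentDomain, fun hpot => hpot.finiteTCharacter h.2⟩

theorem IsPvMD.essentialDomain (hR : IsPvMD R) : EssentialDomain R := by
  refine ⟨{M | IsMaxTIdeal M}, fun M hM => ?_, isDefiningFamily_setOf_isMaxTIdeal⟩
  have := IsMaxTIdeal.isPrime hM
  exact isEssentialPrime_iff.2 (isPvMD_iff.1 hR M hM)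

theorem EssentialDomain.isPvMD (hR : EssentialDomain R) (hpot : TPotentDomain R)
    (hdim : TDimensionOne R) : IsPvMD R := by
  obtain ⟨𝓟, hess, h𝓟⟩ := hR
  refine isPvMD_iff.2 fun M _ hM => ?_
  obtain ⟨-, I, hI, hIM⟩ := hpot M hM
  exact isEssentialPrime_iff.1
    (hess M (hI.mem_of_isDefiningFamily hM hIM (hdim M hM) h𝓟 hess))

end DefiningFamily

section CompletelyIntegrallyClosed

variable {R : Type*} [CommRing R] [IsDomain R]

theorem completelyIntegrallyClosed_iff :
    CompletelyIntegrallyClosed R ↔ ∀ (a : R) (y : FractionRing R), a ≠ 0 →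
      (∀ n : ℕ, 0 < n → a ∈ denominatorIdeal R (y ^ n)) → denominatorIdeal R y = ⊤ := by
  simp only [CompletelyIntegrallyClosed, mem_denominatorIdeal, denominatorIdeal_eq_top_iff, eq_comm]

theorem exists_algebraMap_eq_mul_of_denominatorIdeal_le {P : Ideal R} [P.IsPrime]
    [ValuationRing (Localization.AtPrime P)] {y : FractionRing R}
    (hy : denominatorIdeal R y ≤ P) :
    ∃ r, ∃ s ∉ P, algebraMap R (FractionRing R) s = algebraMap R (FractionRing R) r * y := by
  obtain ⟨p, q, hq, rfl⟩ := IsFractionRing.div_surjective (A := R) y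
  have hq0 : algebraMap R (FractionRing R) q ≠ 0 :=
    IsFractionRing.to_map_ne_zero_of_mem_nonZeroDivisors hq
  obtain h | h := ValuationRing.dvd_total (algebraMap R (Localization.AtPrime P) q)
    (algebraMap R (Localization.AtPrime P) p)
  all_goals obtain ⟨s, hs, r, hr⟩ := (algebraMap_dvd_algebraMap_iff P.primeCompl).1 h
  all_goals have hr' := congrArg (algebraMap R (FractionRing R)) hr
  all_goals rw [map_mul, map_mul] at hr'
  · refine absurd (hy (mem_denominatorIdeal.2 ⟨r, ?_⟩)) hs
    rw [← mul_div_assoc, eq_div_iff hq0, hr', mul_comm]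
  · refine ⟨r, s, hs, ?_⟩
    rw [← mul_div_assoc, eq_div_iff hq0, hr', mul_comm]

theorem HeightOnePrime.not_denominatorIdeal_le {P : Ideal R} [hP : P.IsPrime]
    [ValuationRing (Localization.AtPrime P)] (hht : HeightOnePrime P) {a : R} (ha : a ≠ 0)
    {y : FractionRing R} (hy : ∀ n : ℕ, 0 < n → a ∈ denominatorIdeal R (y ^ n)) :
    ¬ denominatorIdeal R y ≤ P := by
  intro hle
  obtain ⟨r, s, hs, hrs⟩ := exists_algebraMap_eq_mul_of_denominatorIdeal_le hle
  have hr : r ∈ P := hle (mem_denominatorIdeal.2 ⟨s, hrs⟩)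
  obtain ⟨n, t, ht, hdvd⟩ := hht.exists_dvd_mul (Submodule.fg_span_singleton r)
    ((Ideal.span_singleton_le_iff_mem _).2 hr) ha
  have htr : t * r ^ n ∈ denominatorIdeal R (y ^ (n + 1)) :=
    Ideal.mem_of_dvd _ (hdvd _ (Ideal.pow_mem_pow (Ideal.mem_span_singleton_self r) n))
      (hy _ n.succ_pos)
  have hts : t * s ^ n ∈ denominatorIdeal R y := by
    obtain ⟨c, hc⟩ := mem_denominatorIdeal.1 htr
    refine mem_denominatorIdeal.2 ⟨c, ?_⟩
    rw [hc, map_mul, map_mul, map_pow, map_pow, hrs]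
    ring
  exact hP.mul_notMem ht (mt (hP.mem_of_pow_mem n) hs) (hle hts)

theorem IsPvMD.completelyIntegrallyClosed (hR : IsPvMD R) (hdim : TDimensionOne R) :
    CompletelyIntegrallyClosed R := by
  refine completelyIntegrallyClosed_iff.2 fun a y ha hy => ?_
  refine denominatorIdeal_eq_top_of_forall_isMaxTIdeal fun M hM => ?_
  have := hM.isPrime
  have := isPvMD_iff.1 hR M hM
  exact (hdim M hM).not_denominatorIdeal_le ha hy

theorem IsTSuperRigid.mono {I J M : Ideal R} (hI : IsTSuperRigid I) (hIJ : I ≤ J) (hJ : J.FG)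
    (hM : IsMaxTIdeal M) (hJM : J ≤ M) : IsTSuperRigid J :=
  ⟨⟨ne_bot_of_le_ne_bot hI.1.1 hIJ, hJ, M, ⟨hM, hJM⟩,
      fun _ ⟨hN, hJN⟩ => hI.1.eq_of_le hN (hIJ.trans hJN) hM (hIJ.trans hJM)⟩,
    fun L hL hJL => hI.2 L hL (hIJ.trans hJL)⟩

theorem IsTSuperRigid.exists_mul_mem_pow {I M P : Ideal R} (hI : IsTSuperRigid I)
    (hM : IsMaxTIdeal M) [P.IsPrime] (hPM : P ≤ M) (hIP : ¬ I ≤ P) {a : R} (ha : a ∈ P) (n : ℕ) :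
    ∃ s ∉ M, s * a ∈ I ^ n := by
  have := hM.isPrime
  obtain ⟨g, hg, hprincipal⟩ := hI.exists_map_eq_span_singleton hM
  have hdisj : Disjoint (M.primeCompl : Set R) P :=
    Set.disjoint_left.2 fun _ hs hsP => hs (hPM hsP)
  have hprime : (P.map (algebraMap R (Localization.AtPrime M))).IsPrime :=
    IsLocalization.isPrime_of_isPrime_disjoint M.primeCompl _ P ‹_› hdisj
  have hgP : g ∉ P.map (algebraMap R (Localization.AtPrime M)) := by
    rwa [← Ideal.span_singleton_le_iff_mem, ← hg, Ideal.map_le_iff_le_comap,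
      ← Ideal.under_def, IsLocalization.under_map_of_isPrime_disjoint M.primeCompl _ ‹_› hdisj]
  have hdvd := pow_dvd_of_mem_of_notMem hprincipal hgP (Ideal.mem_map_of_mem _ ha) n
  rw [← Ideal.mem_span_singleton, ← Ideal.span_singleton_pow, ← hg, ← Ideal.map_pow,
    IsLocalization.algebraMap_mem_map_algebraMap_iff M.primeCompl] at hdvd
  exact hdvd

theorem CompletelyIntegrallyClosed.eq_bot_of_not_le (hR : CompletelyIntegrallyClosed R)
    {I M P : Ideal R} (hI : IsTSuperRigid I) (hM : IsMaxTIdeal M) (hIM : I ≤ M) [P.IsPrime]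
    (hPM : P ≤ M) (hIP : ¬ I ≤ P) : P = ⊥ := by
  by_contra hP0
  obtain ⟨a, ha, ha0⟩ := Submodule.exists_mem_ne_zero_of_ne_bot hP0
  have hlocal (n : ℕ) (N : Ideal R) (hN : IsMaxTIdeal N) : ∃ s ∉ N, s * a ∈ I ^ n := by
    by_cases hIN : I ≤ N
    · obtain rfl := hI.1.eq_of_le hM hIM hN hIN
      exact hI.exists_mul_mem_pow hM hPM hIP ha n
    · have := hN.isPrime
      obtain ⟨s, hs, hsN⟩ := Set.not_subset.1 (mt Ideal.IsPrime.le_of_pow_le hIN : ¬ I ^ n ≤ N)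
      exact ⟨s, hsN, Ideal.mul_mem_right a _ hs⟩
  refine hM.isTProper I hIM (isGVIdeal_iff.2 ⟨hI.1.2.1, hI.1.1, fun y hy => ?_⟩)
  refine completelyIntegrallyClosed_iff.1 hR a y ha0 fun n _ => ?_
  have hpow : I ^ n ≤ denominatorIdeal R (y ^ n) :=
    (Ideal.pow_right_mono hy n).trans (denominatorIdeal_pow_le y n)
  have htop : denominatorIdeal R (algebraMap R (FractionRing R) a * y ^ n) = ⊤ :=
    denominatorIdeal_eq_top_of_forall_isMaxTIdeal fun N hN hle => by
      obtain ⟨s, hs, hsa⟩ := hlocal n N hN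
      exact hs (hle (mem_denominatorIdeal_algebraMap_mul.2 (hpow hsa)))
  exact mem_denominatorIdeal.2 (denominatorIdeal_eq_top_iff.1 htop)

theorem CompletelyIntegrallyClosed.tDimensionOne (hR : CompletelyIntegrallyClosed R)
    (hsuper : TSuperPotentDomain R) : TDimensionOne R := by
  refine fun M hM => ⟨hM.isPrime, hM.ne_bot, fun P hP hPM => ?_⟩
  obtain ⟨v, hvM, hvP⟩ := SetLike.exists_of_lt hPM
  obtain ⟨-, I, hI, hIM⟩ := hsuper M hM
  have hJM : I ⊔ Ideal.span {v} ≤ M := sup_le hIM ((Ideal.span_singleton_le_iff_mem _).2 hvM)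
  have hJ : IsTSuperRigid (I ⊔ Ideal.span {v}) :=
    hI.mono le_sup_left (Submodule.FG.sup hI.1.2.1 (Submodule.fg_span_singleton v)) hM hJM
  refine hR.eq_bot_of_not_le hJ hM hJM hPM.le fun hJP => hvP ?_
  exact (Ideal.span_singleton_le_iff_mem _).1 (le_sup_right.trans hJP)

end CompletelyIntegrallyClosed

/-- For an integral domain `R` the following are equivalent:
(1) `R` is a generalized Krull domain;
(2) `R` is a `t`-potent essential domain of `t`-dimension one;
(3) `R` is a `t`-potent PvMD of `t`-dimension one;
(4) `R` is a completely integrally closed `t`-super potent domain;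
(5) `R` is a `t`-super potent domain of `t`-dimension one. -/
theorem generalizedKrull_tfae {R : Type*} [CommRing R] [IsDomain R] :
    List.TFAE
      [GeneralizedKrullDomain R,
       TPotentDomain R ∧ EssentialDomain R ∧ TDimensionOne R,
       TPotentDomain R ∧ IsPvMD R ∧ TDimensionOne R,
       CompletelyIntegrallyClosed R ∧ TSuperPotentDomain R,
       TSuperPotentDomain R ∧ TDimensionOne R] := by
  tfae_have 1 ↔ 3 := generalizedKrullDomain_iff_tPotentDomain
  tfae_have 3 → 2 := fun ⟨hpot, hPvMD, hdim⟩ => ⟨hpot, hPvMD.essentialDomain, hdim⟩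
  tfae_have 2 → 3 := fun ⟨hpot, hess, hdim⟩ => ⟨hpot, hess.isPvMD hpot hdim, hdim⟩
  tfae_have 3 → 4 := fun ⟨hpot, hPvMD, hdim⟩ =>
    ⟨hPvMD.completelyIntegrallyClosed hdim, hpot.tSuperPotentDomain hPvMD⟩
  tfae_have 4 → 5 := fun ⟨hcic, hsuper⟩ => ⟨hsuper, hcic.tDimensionOne hsuper⟩
  tfae_have 5 → 3 := fun ⟨hsuper, hdim⟩ => ⟨hsuper.tPotentDomain, hsuper.isPvMD hdim, hdim⟩
  tfae_finish
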